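/- Let G be a finite r-regular graph with girth g, equipped with a random label assignment with probabilities (p₀,p), and let i be a nonnegative integer with 2i < g−3. Then the probabilities P(u ∈ W_i), P(u ∈ B_i), P(u ∈ W_i ∧ v ∈ W_i), P(u ∈ B_i ∧ v ∈ W_i) and P(u ∈ B_i ∧ v ∈ B_i) do not depend on the choice of the vertex u and of the neighbour v of u. Moreover, if w is a neighbour of u distinct from v, then P(v ∈ B_i ∧ u ∈ B_i ∧ w ∈ R_{≤i}) does not depend on the choice of u, v and w. -/

import Mathlib

open MeasureTheory ProbabilityTheory Filter Set

namespace InducedForest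

variable {V : Type*}

/-- Label `i` is *relevant* for vertex `v` (w.r.t. the label assignment `S`):
either `i = 0` and `0 ∈ S v`, or `i ∈ S v`, no `j < i` is relevant for `v`, and
there is a unique neighbour of `v` having a relevant label strictly smaller than `i`. -/
def Relevant (G : SimpleGraph V) (S : V → Set ℕ) (i : ℕ) : V → Prop :=
  Nat.strongRecOn i (fun i ih v =>
    (i = 0 ∧ 0 ∈ S v) ∨
    (i ∈ S v ∧ (∀ j, (h : j < i) → ¬ ih j h v) ∧
      (∃! u, G.Adj v u ∧ ∃ j, ∃ h : j < i, ih j h u)))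

/-- `v` has some relevant label `≤ l`, i.e. `v ∈ R_{≤ l}`. -/
def RelevantLe (G : SimpleGraph V) (S : V → Set ℕ) (l : ℕ) (v : V) : Prop :=
  ∃ i ≤ l, Relevant G S i v

inductive Colour | white | blue | orange | purple
deriving DecidableEq

open Classical in
/-- The colour of `u` at time `l`. -/
noncomputable def colourAt (G : SimpleGraph V) (S : V → Set ℕ) (l : ℕ) (u : V) : Colour :=
  if RelevantLe G S l u then Colour.purple
  else if ∀ v, G.Adj u v → ¬ RelevantLe G S l v then Colour.white
  else if ∃! v, G.Adj u v ∧ RelevantLe G S l v then Colour.blue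
  else Colour.orange

/-- The set `W_l` of white vertices at time `l`. -/
def White (G : SimpleGraph V) (S : V → Set ℕ) (l : ℕ) : Set V :=
  {u | ¬ RelevantLe G S l u ∧ ∀ v, G.Adj u v → ¬ RelevantLe G S l v}

/-- The set `B_l` of blue vertices at time `l`. -/
def Blue (G : SimpleGraph V) (S : V → Set ℕ) (l : ℕ) : Set V :=
  {u | ¬ RelevantLe G S l u ∧ ∃! v, G.Adj u v ∧ RelevantLe G S l v}
/-- The label assignment determined by a sample point `ω`. -/
def labels (ω : V → ℕ → Bool) : V → Set ℕ := fun v => {i | ω v i = true}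

/-- `μ` is the random label assignment with probabilities `(p₀, p)`: the events
`i ∈ S(v)` are mutually independent, and each has probability `p₀` if `i = 0`
and `p` if `i ≥ 1`. -/
def IsLabelMeasure (μ : Measure (V → ℕ → Bool)) (p₀ p : ℝ) : Prop :=
  IsProbabilityMeasure μ ∧
  iIndepSet (fun q : V × ℕ => {ω : V → ℕ → Bool | ω q.1 q.2 = true}) μ ∧
  ∀ (v : V) (i : ℕ), μ {ω | ω v i = true} = ENNReal.ofReal (if i = 0 then p₀ else p)

/-- Event that `u` is white at time `l`. -/
def WEv (G : SimpleGraph V) (l : ℕ) (u : V) : Set (V → ℕ → Bool) :=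
  {ω | u ∈ White G (labels ω) l}

/-- Event that `u` is blue at time `l`. -/
def BEv (G : SimpleGraph V) (l : ℕ) (u : V) : Set (V → ℕ → Bool) :=
  {ω | u ∈ Blue G (labels ω) l}

/-- Event that `u` has relevant label `i`, i.e. `u ∈ R_i`. -/
def REv (G : SimpleGraph V) (i : ℕ) (u : V) : Set (V → ℕ → Bool) :=
  {ω | Relevant G (labels ω) i u}

/-- Event that `u` has a relevant label `≤ l`, i.e. `u ∈ R_{≤ l}`. -/
def RLeEv (G : SimpleGraph V) (l : ℕ) (u : V) : Set (V → ℕ → Bool) :=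
  {ω | RelevantLe G (labels ω) l u}

/-- `G` is `r`-regular. -/
def IsRegular (G : SimpleGraph V) (r : ℕ) : Prop :=
  ∀ v : V, (G.neighborSet v).ncard = r

/-! A map `f` that is bijective on the neighbourhoods of all vertices within distance `i` of the
edge `uv` carries the colours of `u` and `v` at time `i` over to `f u` and `f v`, because these
colours are computed from the labels within distance `i + 1` by recursion along neighbourhoods. Two
edges of `r`-regular graphs are related by such a map, built one sphere at a time: as long as the
girth is at least `2i + 4`, a new vertex has only one neighbour in the ball around the edge, so that
the extensions to the various neighbourhoods never conflict. The same bound makes any such `f`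
injective on the ball of radius `i + 1`, and a random label assignment pulled back along an
injective map of vertices is again a random label assignment, whose law is unique. -/

variable {V' : Type*}

section Girth

variable {G : SimpleGraph V}

lemma exists_isCycle_of_isPath_ne {a b : V} {p q : G.Walk a b} (hp : p.IsPath) (hq : q.IsPath)
    (hne : p ≠ q) : ∃ (c : V) (w : G.Walk c c), w.IsCycle ∧ w.length ≤ p.length + q.length := by
  classical
  let H : SimpleGraph V := SimpleGraph.fromEdgeSet {e | e ∈ p.edges ∨ e ∈ q.edges}
  have edge_mem_G {e : Sym2 V} (he : e ∈ p.edges ∨ e ∈ q.edges) : e ∈ G.edgeSet :=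
    he.elim (p.edges_subset_edgeSet ·) (q.edges_subset_edgeSet ·)
  have mem_H {e : Sym2 V} : e ∈ H.edgeSet ↔ e ∈ p.edges ∨ e ∈ q.edges := by
    rw [SimpleGraph.edgeSet_fromEdgeSet]
    exact ⟨fun h => h.1, fun h => ⟨h, G.not_isDiag_of_mem_edgeSet (edge_mem_G h)⟩⟩
  have hpH : ∀ e ∈ p.edges, e ∈ H.edgeSet := fun e he => mem_H.2 (.inl he)
  have hqH : ∀ e ∈ q.edges, e ∈ H.edgeSet := fun e he => mem_H.2 (.inr he)
  have not_acyclic : ¬ H.IsAcyclic := by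
    intro hH
    have heq : p.transfer H hpH = q.transfer H hqH :=
      congrArg Subtype.val ((hH.subsingleton_path a b).elim
        ⟨p.transfer H hpH, hp.transfer hpH⟩ ⟨q.transfer H hqH, hq.transfer hqH⟩)
    refine hne (SimpleGraph.Walk.ext_support ?_)
    rw [← SimpleGraph.Walk.support_transfer p hpH, heq, SimpleGraph.Walk.support_transfer]
  obtain ⟨c, w, hw⟩ : ∃ (c : V) (w : H.Walk c c), w.IsCycle := by
    simpa only [SimpleGraph.IsAcyclic, not_forall, not_not] using not_acyclic
  have hwG : ∀ e ∈ w.edges, e ∈ G.edgeSet :=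
    fun e he => edge_mem_G (mem_H.1 (w.edges_subset_edgeSet he))
  refine ⟨c, w.transfer G hwG, hw.transfer hwG, ?_⟩
  have hsub : w.edges ⊆ p.edges ++ q.edges :=
    fun e he => List.mem_append.2 (mem_H.1 (w.edges_subset_edgeSet he))
  simpa only [SimpleGraph.Walk.length_transfer, List.length_append, SimpleGraph.Walk.length_edges]
    using (hw.edges_nodup.subperm hsub).length_le

lemma eq_of_isPath_of_adj {a x x' y : V} {p : G.Walk a x} {q : G.Walk a x'}
    (hp : p.IsPath) (hq : q.IsPath) (hyp : y ∉ p.support) (hyq : y ∉ q.support)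
    (hxy : G.Adj x y) (hxy' : G.Adj x' y)
    (hg : ((p.length + q.length + 2 : ℕ) : ℕ∞) < G.egirth) : x = x' := by
  suffices h : p.concat hxy = q.concat hxy' by
    rw [← p.penultimate_concat hxy, h, q.penultimate_concat hxy']
  by_contra hne
  obtain ⟨c, w, hw, hlen⟩ :=
    exists_isCycle_of_isPath_ne (hp.concat hyp hxy) (hq.concat hyq hxy') hne
  have : w.length ≤ p.length + q.length + 2 := by
    simp only [SimpleGraph.Walk.length_concat] at hlen
    omega
  exact ((SimpleGraph.egirth_le_length hw).trans (by exact_mod_cast this)).not_gt hg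

end Girth

section Ball

/-- The set of vertices at distance at most `k` from the set `A`. -/
def ball (G : SimpleGraph V) (A : Set V) : ℕ → Set V
  | 0 => A
  | k + 1 => ball G A k ∪ ⋃ x ∈ ball G A k, G.neighborSet x

variable {G : SimpleGraph V} {A : Set V} {k : ℕ} {u v x x' y : V}

lemma mem_ball_succ : y ∈ ball G A (k + 1) ↔ y ∈ ball G A k ∨ ∃ x ∈ ball G A k, G.Adj x y := by
  simp only [ball, mem_union, mem_iUnion₂, SimpleGraph.mem_neighborSet, exists_prop]

lemma ball_mono : Monotone (ball G A) :=
  monotone_nat_of_le_succ fun _ => subset_union_left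

lemma mem_ball_of_mem (hx : x ∈ A) : x ∈ ball G A k :=
  ball_mono (Nat.zero_le k) hx

lemma mem_ball_succ_of_adj (hx : x ∈ ball G A k) (hxy : G.Adj x y) : y ∈ ball G A (k + 1) :=
  mem_ball_succ.2 (.inr ⟨x, hx, hxy⟩)

lemma exists_adj_of_mem_ball_succ (hy : y ∈ ball G A (k + 1)) (hyk : y ∉ ball G A k) :
    ∃ x ∈ ball G A k, G.Adj x y :=
  (mem_ball_succ.1 hy).resolve_left hyk

lemma exists_isPath_of_mem_ball (hx : x ∈ ball G A k) :
    ∃ a ∈ A, ∃ p : G.Walk a x, p.IsPath ∧ p.length ≤ k ∧ ∀ z ∈ p.support, z ∈ ball G A k := by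
  induction k generalizing x with
  | zero => exact ⟨x, hx, .nil, .nil, le_rfl, by simpa using hx⟩
  | succ k ih =>
    by_cases hxk : x ∈ ball G A k
    · obtain ⟨a, ha, p, hp, hlen, hsupp⟩ := ih hxk
      exact ⟨a, ha, p, hp, hlen.trans k.le_succ, fun z hz => ball_mono k.le_succ (hsupp z hz)⟩
    · obtain ⟨y, hy, hyx⟩ := exists_adj_of_mem_ball_succ hx hxk
      obtain ⟨a, ha, p, hp, hlen, hsupp⟩ := ih hy
      refine ⟨a, ha, p.concat hyx, hp.concat (fun h => hxk (hsupp x h)) hyx, by simpa using hlen,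
        fun z hz => ?_⟩
      rw [SimpleGraph.Walk.support_concat, List.mem_append, List.mem_singleton] at hz
      rcases hz with hz | rfl
      · exact ball_mono k.le_succ (hsupp z hz)
      · exact hx

lemma exists_isPath_pair_of_mem_ball (huv : G.Adj u v)
    (hx : x ∈ ball G {u, v} k) (hx' : x' ∈ ball G {u, v} k) :
    ∃ (a : V) (p : G.Walk a x) (q : G.Walk a x'), p.IsPath ∧ q.IsPath ∧
      p.length + q.length ≤ 2 * k + 1 ∧
      (∀ z ∈ p.support, z ∈ ball G {u, v} k) ∧ ∀ z ∈ q.support, z ∈ ball G {u, v} k := by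
  classical
  obtain ⟨a, ha, p, hp, hlen, hsupp⟩ := exists_isPath_of_mem_ball hx
  obtain ⟨a', ha', q, hq, hlen', hsupp'⟩ := exists_isPath_of_mem_ball hx'
  by_cases haa : a = a'
  · subst haa
    exact ⟨a, p, q, hp, hq, by omega, hsupp, hsupp'⟩
  have hadj : G.Adj a a' := by
    rcases ha with rfl | rfl <;> rcases ha' with rfl | rfl
    exacts [absurd rfl haa, huv, huv.symm, absurd rfl haa]
  have hbypass := (q.cons hadj).length_bypass_le_length
  rw [SimpleGraph.Walk.length_cons] at hbypass
  refine ⟨a, p, (q.cons hadj).bypass, hp, SimpleGraph.Walk.bypass_isPath _, by omega, hsupp,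
    fun z hz => ?_⟩
  have hz' := SimpleGraph.Walk.support_bypass_subset_support _ hz
  rw [SimpleGraph.Walk.support_cons, List.mem_cons] at hz'
  rcases hz' with rfl | hz'
  · exact mem_ball_of_mem ha
  · exact hsupp' z hz'

lemma eq_of_adj_of_notMem_ball (huv : G.Adj u v) (hg : ((2 * k + 4 : ℕ) : ℕ∞) ≤ G.egirth)
    (hx : x ∈ ball G {u, v} k) (hx' : x' ∈ ball G {u, v} k) (hy : y ∉ ball G {u, v} k)
    (hxy : G.Adj x y) (hxy' : G.Adj x' y) : x = x' := by
  obtain ⟨a, p, q, hp, hq, hlen, hps, hqs⟩ := exists_isPath_pair_of_mem_ball huv hx hx'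
  exact eq_of_isPath_of_adj hp hq (fun h => hy (hps y h)) (fun h => hy (hqs y h)) hxy hxy'
    (lt_of_lt_of_le (by exact_mod_cast (by omega)) hg)

lemma mem_ball_or_mem_ball_of_adj (huv : G.Adj u v) (hg : ((2 * k + 5 : ℕ) : ℕ∞) ≤ G.egirth)
    (hx : x ∈ ball G {u, v} (k + 1)) (hy : y ∈ ball G {u, v} (k + 1)) (hxy : G.Adj x y) :
    x ∈ ball G {u, v} k ∨ y ∈ ball G {u, v} k := by
  by_contra! ⟨hxk, hyk⟩
  obtain ⟨x₀, hx₀, hxx⟩ := exists_adj_of_mem_ball_succ hx hxk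
  obtain ⟨y₀, hy₀, hyy⟩ := exists_adj_of_mem_ball_succ hy hyk
  obtain ⟨a, p, q, hp, hq, hlen, hps, hqs⟩ := exists_isPath_pair_of_mem_ball huv hx₀ hy₀
  have hyp : y ∉ (p.concat hxx).support := by
    rw [SimpleGraph.Walk.support_concat, List.mem_append, List.mem_singleton]
    rintro (h | rfl)
    · exact hyk (hps y h)
    · exact hxy.ne rfl
  have hxy₀ : x = y₀ := by
    refine eq_of_isPath_of_adj (hp.concat (fun h => hxk (hps x h)) hxx) hq hyp
      (fun h => hyk (hqs y h)) hxy hyy (lt_of_lt_of_le ?_ hg)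
    rw [SimpleGraph.Walk.length_concat]
    exact_mod_cast (by omega)
  exact hxk (hxy₀ ▸ hy₀)

end Ball

section Covering

/-- `f` is a covering map of graphs on `A`: it maps the neighbours of each vertex of `A`
bijectively onto the neighbours of its image. Nothing is asked of `f` elsewhere. -/
def IsCoveringOn (G : SimpleGraph V) (G' : SimpleGraph V') (f : V → V') (A : Set V) : Prop :=
  ∀ x ∈ A, BijOn f (G.neighborSet x) (G'.neighborSet (f x))

namespace IsCoveringOn

variable {G : SimpleGraph V} {G' : SimpleGraph V'} {f : V → V'} {A B : Set V} {k : ℕ} {u v x y : V}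

lemma mono (hf : IsCoveringOn G G' f B) (hAB : A ⊆ B) : IsCoveringOn G G' f A :=
  fun x hx => hf x (hAB hx)

lemma adj_map (hf : IsCoveringOn G G' f A) (hx : x ∈ A) (hxy : G.Adj x y) : G'.Adj (f x) (f y) :=
  (hf x hx).mapsTo hxy

lemma image_ball (hf : IsCoveringOn G G' f (ball G A k)) :
    f '' ball G A k = ball G' (f '' A) k := by
  induction k with
  | zero => rfl
  | succ k ih =>
    have hfk := hf.mono (ball_mono k.le_succ)
    rw [ball, ball, image_union, image_iUnion₂, ← ih hfk, biUnion_image]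
    exact congrArg _ (iUnion₂_congr fun x hx => (hfk x hx).image_eq)

lemma image_ball_pair (hf : IsCoveringOn G G' f (ball G {u, v} k)) :
    f '' ball G {u, v} k = ball G' {f u, f v} k := by
  rw [hf.image_ball, image_pair]

lemma adj_of_adj_map (hf : IsCoveringOn G G' f A) (hinj : InjOn f B) (hx : x ∈ A)
    (hxB : G.neighborSet x ⊆ B) (hy : y ∈ B) (hxy : G'.Adj (f x) (f y)) : G.Adj x y := by
  obtain ⟨z, hxz, hzy⟩ := (hf x hx).surjOn hxy
  exact hinj (hxB hxz) hy hzy ▸ hxz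

lemma adj_map_of_mem_ball_succ (hf : IsCoveringOn G G' f (ball G {u, v} k)) (huv : G.Adj u v)
    (hg : ((2 * k + 5 : ℕ) : ℕ∞) ≤ G.egirth) (hx : x ∈ ball G {u, v} (k + 1))
    (hy : y ∈ ball G {u, v} (k + 1)) (hxy : G.Adj x y) : G'.Adj (f x) (f y) :=
  (mem_ball_or_mem_ball_of_adj huv hg hx hy hxy).elim (hf.adj_map · hxy)
    fun hyk => (hf.adj_map hyk hxy.symm).symm

lemma adj_of_adj_map_of_mem_ball_succ (hf : IsCoveringOn G G' f (ball G {u, v} k))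
    (huv : G.Adj u v) (hg : ((2 * k + 5 : ℕ) : ℕ∞) ≤ G'.egirth)
    (hinj : InjOn f (ball G {u, v} (k + 1))) (hx : x ∈ ball G {u, v} (k + 1))
    (hy : y ∈ ball G {u, v} (k + 1)) (hxy : G'.Adj (f x) (f y)) : G.Adj x y := by
  have huv' : G'.Adj (f u) (f v) := hf.adj_map (mem_ball_of_mem (.inl rfl)) huv
  have hmem_map {z : V} (hz : z ∈ ball G {u, v} (k + 1)) : f z ∈ ball G' {f u, f v} (k + 1) := by
    rcases mem_ball_succ.1 hz with hzk | ⟨t, ht, htz⟩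
    · exact ball_mono k.le_succ (hf.image_ball_pair ▸ mem_image_of_mem f hzk)
    · exact mem_ball_succ_of_adj (hf.image_ball_pair ▸ mem_image_of_mem f ht) (hf.adj_map ht htz)
  have hmem_of_map {z : V} (hz : z ∈ ball G {u, v} (k + 1)) (hfz : f z ∈ ball G' {f u, f v} k) :
      z ∈ ball G {u, v} k := by
    rwa [← hf.image_ball_pair, hinj.mem_image_iff (ball_mono k.le_succ) hz] at hfz
  have hsub {z : V} (hz : z ∈ ball G {u, v} k) : G.neighborSet z ⊆ ball G {u, v} (k + 1) :=
    fun _ => mem_ball_succ_of_adj hz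
  rcases mem_ball_or_mem_ball_of_adj huv' hg (hmem_map hx) (hmem_map hy) hxy with h | h
  · have hxk := hmem_of_map hx h
    exact hf.adj_of_adj_map hinj hxk (hsub hxk) hy hxy
  · have hyk := hmem_of_map hy h
    exact (hf.adj_of_adj_map hinj hyk (hsub hyk) hx hxy.symm).symm

lemma injOn_ball_succ (hf : IsCoveringOn G G' f (ball G {u, v} k)) (huv : G.Adj u v)
    (hg : ((2 * k + 4 : ℕ) : ℕ∞) ≤ G'.egirth) (hinj : InjOn f (ball G {u, v} k))
    (hadj : ∀ x ∈ ball G {u, v} k, ∀ y ∈ ball G {u, v} k, G'.Adj (f x) (f y) → G.Adj x y) :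
    InjOn f (ball G {u, v} (k + 1)) := by
  have huv' : G'.Adj (f u) (f v) := hf.adj_map (mem_ball_of_mem (.inl rfl)) huv
  have eq_of_inner {y z : V} (hy : y ∈ ball G {u, v} (k + 1)) (hz : z ∈ ball G {u, v} k)
      (hyz : f y = f z) : y = z := by
    rcases mem_ball_succ.1 hy with hyk | ⟨x, hx, hxy⟩
    · exact hinj hyk hz hyz
    · have hxz : G.Adj x z := hadj x hx z hz (hyz ▸ hf.adj_map hx hxy)
      exact (hf x hx).injOn hxy hxz hyz
  intro y hy y' hy' hyy
  by_cases hyk : y ∈ ball G {u, v} k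
  · exact (eq_of_inner hy' hyk hyy.symm).symm
  by_cases hyk' : y' ∈ ball G {u, v} k
  · exact eq_of_inner hy hyk' hyy
  obtain ⟨x, hx, hxy⟩ := exists_adj_of_mem_ball_succ hy hyk
  obtain ⟨x', hx', hxy'⟩ := exists_adj_of_mem_ball_succ hy' hyk'
  have hfy : f y ∉ ball G' {f u, f v} k := by
    rw [← hf.image_ball_pair]
    rintro ⟨z, hz, hzy⟩
    exact hyk (eq_of_inner hy hz hzy.symm ▸ hz)
  have hfx : f x = f x' :=
    eq_of_adj_of_notMem_ball huv' hg (hf.image_ball_pair ▸ mem_image_of_mem f hx)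
      (hf.image_ball_pair ▸ mem_image_of_mem f hx') hfy (hf.adj_map hx hxy)
      (hyy ▸ hf.adj_map hx' hxy')
  obtain rfl := hinj hx hx' hfx
  exact (hf x hx).injOn hxy hxy' hyy

lemma injOn_ball (hf : IsCoveringOn G G' f (ball G {u, v} k)) (huv : G.Adj u v)
    (hg : ((2 * k + 4 : ℕ) : ℕ∞) ≤ G'.egirth) : InjOn f (ball G {u, v} (k + 1)) := by
  induction k with
  | zero =>
    have huv' : G'.Adj (f u) (f v) := hf.adj_map (.inl rfl) huv
    refine hf.injOn_ball_succ huv hg (injOn_pair.2 fun h => absurd h huv'.ne) ?_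
    rintro x (rfl | rfl) y (rfl | rfl) hxy
    exacts [absurd rfl hxy.ne, huv, huv.symm, absurd rfl hxy.ne]
  | succ k ih =>
    have hfk := hf.mono (ball_mono k.le_succ)
    have hinj := ih hfk (le_trans (by exact_mod_cast (by omega)) hg)
    exact hf.injOn_ball_succ huv hg hinj fun x hx y hy =>
      hfk.adj_of_adj_map_of_mem_ball_succ huv (le_trans (by exact_mod_cast (by omega)) hg) hinj
        hx hy

end IsCoveringOn

end Covering

section Extension

lemma exists_bijOn_eqOn {s : Finset V} {t : Finset V'} {A : Set V} {f : V → V'}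
    (hcard : s.card = t.card) (hmaps : MapsTo f (A ∩ s) t) (hinj : InjOn f (A ∩ s)) :
    ∃ e : V → V', BijOn e s t ∧ EqOn e f (A ∩ s) := by
  classical
  obtain ⟨e, he⟩ := MapsTo.exists_equiv_extend_of_card_eq (α := s) (t := t)
    (s := Subtype.val ⁻¹' A) (f := fun y => f y) (by simpa using hcard)
    (fun y hy => hmaps ⟨hy, y.2⟩)
    (fun y hy z hz hyz => Subtype.ext (hinj ⟨hy, y.2⟩ ⟨hz, z.2⟩ hyz))
  let e' : V → V' := fun y => if hy : y ∈ s then e ⟨y, hy⟩ else f y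
  have he' (y : s) : e' y = e y := dif_pos y.2
  refine ⟨e', ⟨fun y hy => ?_, fun y hy z hz hyz => ?_, fun t ht => ?_⟩, fun y hy => ?_⟩
  · exact he' ⟨y, hy⟩ ▸ (e ⟨y, hy⟩).2
  · rw [he' ⟨y, hy⟩, he' ⟨z, hz⟩] at hyz
    exact congrArg Subtype.val (e.injective (Subtype.ext hyz))
  · exact ⟨e.symm ⟨t, ht⟩, (e.symm ⟨t, ht⟩).2, by rw [he', e.apply_symm_apply]⟩
  · exact (he' ⟨y, hy.2⟩).trans (he ⟨y, hy.2⟩ hy.1)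

variable {G : SimpleGraph V} {G' : SimpleGraph V'} [G.LocallyFinite] [G'.LocallyFinite] {r : ℕ}

lemma exists_isCoveringOn_eqOn (hG : G.IsRegularOfDegree r) (hG' : G'.IsRegularOfDegree r)
    {A D : Set V} (hAD : A ⊆ D) {f : V → V'} (hinj : InjOn f D)
    (hadj : ∀ x ∈ A, ∀ y ∈ D, G.Adj x y → G'.Adj (f x) (f y))
    (hparent : ∀ y ∉ D, ∀ x ∈ A, ∀ x' ∈ A, G.Adj x y → G.Adj x' y → x = x') :
    ∃ f' : V → V', EqOn f' f D ∧ IsCoveringOn G G' f' A := by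
  classical
  have hext (x : V) : ∃ e : V → V', x ∈ A →
      BijOn e (G.neighborSet x) (G'.neighborSet (f x)) ∧ EqOn e f (D ∩ G.neighborSet x) := by
    by_cases hx : x ∈ A
    · obtain ⟨e, he⟩ := exists_bijOn_eqOn (s := G.neighborFinset x) (t := G'.neighborFinset (f x))
        (A := D) (f := f) ((hG x).trans (hG' (f x)).symm)
        (fun y hy => by simpa using hadj x hx y hy.1 (by simpa using hy.2))
        (hinj.mono inter_subset_left)
      exact ⟨e, fun _ => by simpa only [SimpleGraph.coe_neighborFinset] using he⟩
    · exact ⟨f, fun h => absurd h hx⟩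
  choose e he using hext
  let f' : V → V' := fun y => if h : y ∉ D ∧ ∃ x ∈ A, G.Adj x y then e h.2.choose y else f y
  have hfD : EqOn f' f D := fun y hy => dif_neg fun h => h.1 hy
  have hfe {x : V} (hx : x ∈ A) : EqOn f' (e x) (G.neighborSet x) := by
    intro y hxy
    by_cases hy : y ∈ D
    · exact (hfD hy).trans ((he x hx).2 ⟨hy, hxy⟩).symm
    · have h : y ∉ D ∧ ∃ x ∈ A, G.Adj x y := ⟨hy, x, hx, hxy⟩
      have hchoose : h.2.choose = x :=
        hparent y hy _ h.2.choose_spec.1 x hx h.2.choose_spec.2 hxy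
      exact (dif_pos h).trans (congrArg (e · y) hchoose)
  refine ⟨f', hfD, fun x hx => ?_⟩
  rw [hfD (hAD hx)]
  exact (he x hx).1.congr (hfe hx).symm

lemma exists_isCoveringOn_ball_zero (hG : G.IsRegularOfDegree r) (hG' : G'.IsRegularOfDegree r)
    {u v w : V} {u' v' w' : V'} (huv : G.Adj u v) (huw : G.Adj u w) (huv' : G'.Adj u' v')
    (huw' : G'.Adj u' w') (hvw : v = w ↔ v' = w') (hg : 4 ≤ G.egirth) :
    ∃ f : V → V', f u = u' ∧ f v = v' ∧ f w = w' ∧ IsCoveringOn G G' f (ball G {u, v} 0) := by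
  classical
  let f₀ : V → V' := fun x => if x = u then u' else if x = v then v' else w'
  have hu₀ : f₀ u = u' := if_pos rfl
  have hv₀ : f₀ v = v' := (if_neg huv.ne').trans (if_pos rfl)
  have hw₀ : f₀ w = w' := by
    by_cases h : w = v
    · exact h ▸ hv₀.trans (hvw.1 h.symm)
    · exact (if_neg huw.ne').trans (if_neg h)
  have hparent : ∀ y ∉ ball G {u, v} 0, ∀ x ∈ ball G {u, v} 0, ∀ x' ∈ ball G {u, v} 0,
      G.Adj x y → G.Adj x' y → x = x' :=
    fun y hy x hx x' hx' => eq_of_adj_of_notMem_ball huv hg hx hx' hy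
  have hinj : InjOn f₀ {u, v, w} := by
    rintro x (rfl | rfl | rfl) y (rfl | rfl | rfl) hxy <;> grind [huv'.ne, huw'.ne]
  have hadj : ∀ x ∈ ball G {u, v} 0, ∀ y ∈ ({u, v, w} : Set V),
      G.Adj x y → G'.Adj (f₀ x) (f₀ y) := by
    rintro x (rfl | rfl) y (rfl | rfl | rfl) hxy
    · exact absurd rfl hxy.ne
    · rwa [hu₀, hv₀]
    · rwa [hu₀, hw₀]
    · rw [hu₀, hv₀]; exact huv'.symm
    · exact absurd rfl hxy.ne
    · refine absurd (hparent y ?_ u (.inl rfl) x (.inr rfl) huw hxy) huv.ne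
      rintro (rfl | rfl)
      exacts [huw.ne rfl, hxy.ne rfl]
  have hball : ball G {u, v} 0 ⊆ {u, v, w} := insert_subset_insert (by simp)
  obtain ⟨f, hf, hcover⟩ := exists_isCoveringOn_eqOn hG hG' hball hinj hadj
    fun y hy => hparent y fun h => hy (hball h)
  exact ⟨f, (hf (by simp)).trans hu₀, (hf (by simp)).trans hv₀, (hf (by simp)).trans hw₀, hcover⟩

lemma exists_isCoveringOn_ball (hG : G.IsRegularOfDegree r) (hG' : G'.IsRegularOfDegree r)
    {u v w : V} {u' v' w' : V'} (huv : G.Adj u v) (huw : G.Adj u w) (huv' : G'.Adj u' v')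
    (huw' : G'.Adj u' w') (hvw : v = w ↔ v' = w') {k : ℕ}
    (hg : ((2 * k + 4 : ℕ) : ℕ∞) ≤ G.egirth) (hg' : ((2 * k + 4 : ℕ) : ℕ∞) ≤ G'.egirth) :
    ∃ f : V → V', f u = u' ∧ f v = v' ∧ f w = w' ∧ IsCoveringOn G G' f (ball G {u, v} k) := by
  induction k with
  | zero => exact exists_isCoveringOn_ball_zero hG hG' huv huw huv' huw' hvw hg
  | succ k ih =>
    have hle (n : ℕ) (hn : n ≤ 2 * (k + 1) + 4) {g : ℕ∞} (hg : ((2 * (k + 1) + 4 : ℕ) : ℕ∞) ≤ g) :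
        (n : ℕ∞) ≤ g := le_trans (by exact_mod_cast hn) hg
    obtain ⟨f₀, hu, hv, hw, hf₀⟩ := ih (hle _ (by omega) hg) (hle _ (by omega) hg')
    obtain ⟨f, hf, hcover⟩ := exists_isCoveringOn_eqOn hG hG' Subset.rfl
      (hf₀.injOn_ball huv (hle _ (by omega) hg'))
      (fun x hx y hy => hf₀.adj_map_of_mem_ball_succ huv (hle _ (by omega) hg) hx hy)
      (fun y hy x hx x' hx' => eq_of_adj_of_notMem_ball huv hg hx hx' hy)
    have hwball : w ∈ ball G {u, v} (k + 1) :=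
      mem_ball_succ_of_adj (mem_ball_of_mem (.inl rfl)) huw
    exact ⟨f, (hf (mem_ball_of_mem (.inl rfl))).trans hu,
      (hf (mem_ball_of_mem (.inr rfl))).trans hv, (hf hwball).trans hw, hcover⟩

end Extension

section Transfer

lemma relevant_iff {G : SimpleGraph V} {S : V → Set ℕ} {i : ℕ} {v : V} :
    Relevant G S i v ↔ (i = 0 ∧ 0 ∈ S v) ∨
      (i ∈ S v ∧ (∀ j < i, ¬ Relevant G S j v) ∧
        ∃! u, u ∈ G.neighborSet v ∧ ∃ j < i, Relevant G S j u) := by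
  conv_lhs => unfold Relevant
  rw [Nat.strongRecOn_eq]
  simp only [exists_prop]
  rfl

lemma existsUnique_mem_and_iff_of_bijOn {f : V → V'} {s : Set V} {t : Set V'} (hf : BijOn f s t)
    {P : V → Prop} {Q : V' → Prop} (h : ∀ x ∈ s, (P x ↔ Q (f x))) :
    (∃! x, x ∈ s ∧ P x) ↔ ∃! y, y ∈ t ∧ Q y := by
  constructor
  · rintro ⟨x, ⟨hx, hPx⟩, huniq⟩
    refine ⟨f x, ⟨hf.mapsTo hx, (h x hx).1 hPx⟩, fun y ⟨hy, hQy⟩ => ?_⟩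
    obtain ⟨z, hz, rfl⟩ := hf.surjOn hy
    rw [huniq z ⟨hz, (h z hz).2 hQy⟩]
  · rintro ⟨y, ⟨hy, hQy⟩, huniq⟩
    obtain ⟨x, hx, rfl⟩ := hf.surjOn hy
    exact ⟨x, ⟨hx, (h x hx).2 hQy⟩,
      fun z ⟨hz, hPz⟩ => hf.injOn hz hx (huniq (f z) ⟨hf.mapsTo hz, (h z hz).1 hPz⟩)⟩

namespace IsCoveringOn

variable {G : SimpleGraph V} {G' : SimpleGraph V'} {f : V → V'} {A : Set V} {k d i : ℕ} {x : V}
  {S : V → Set ℕ} {S' : V' → Set ℕ}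

lemma relevant_iff (hf : IsCoveringOn G G' f (ball G A k))
    (hS : EqOn S (S' ∘ f) (ball G A (k + 1))) (hx : x ∈ ball G A d) (hd : d + i ≤ k + 1) :
    Relevant G S i x ↔ Relevant G' S' i (f x) := by
  induction i using Nat.strong_induction_on generalizing d x with
  | _ i ih =>
    have hSx : S x = S' (f x) := hS (ball_mono (by omega) hx)
    have hsmaller : (∀ j < i, ¬ Relevant G S j x) ↔ ∀ j < i, ¬ Relevant G' S' j (f x) :=
      forall₂_congr fun j hj => not_congr (ih j hj hx (by omega))
    have hnbr : (∃! u, u ∈ G.neighborSet x ∧ ∃ j < i, Relevant G S j u) ↔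
        ∃! u, u ∈ G'.neighborSet (f x) ∧ ∃ j < i, Relevant G' S' j u := by
      rcases Nat.eq_zero_or_pos i with rfl | hi
      · simp
      · refine existsUnique_mem_and_iff_of_bijOn (hf x (ball_mono (by omega) hx)) fun y hxy => ?_
        exact exists_congr fun j => and_congr_right fun hj =>
          ih j hj (mem_ball_succ_of_adj hx hxy) (by omega)
    rw [InducedForest.relevant_iff, InducedForest.relevant_iff, hSx, hsmaller, hnbr]

lemma relevantLe_iff (hf : IsCoveringOn G G' f (ball G A k))
    (hS : EqOn S (S' ∘ f) (ball G A (k + 1))) (hx : x ∈ ball G A 1) :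
    RelevantLe G S k x ↔ RelevantLe G' S' k (f x) :=
  exists_congr fun _ => and_congr_right fun hj => hf.relevant_iff hS hx (by omega)

lemma mem_white_iff (hf : IsCoveringOn G G' f (ball G A k))
    (hS : EqOn S (S' ∘ f) (ball G A (k + 1))) (hx : x ∈ A) :
    x ∈ White G S k ↔ f x ∈ White G' S' k := by
  refine and_congr (not_congr (hf.relevantLe_iff hS (mem_ball_of_mem hx))) ?_
  refine Iff.trans ?_ (hf x (mem_ball_of_mem hx)).forall.symm
  exact forall₂_congr fun y hxy =>
    not_congr (hf.relevantLe_iff hS (mem_ball_succ_of_adj hx hxy))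

lemma mem_blue_iff (hf : IsCoveringOn G G' f (ball G A k))
    (hS : EqOn S (S' ∘ f) (ball G A (k + 1))) (hx : x ∈ A) :
    x ∈ Blue G S k ↔ f x ∈ Blue G' S' k := by
  refine and_congr (not_congr (hf.relevantLe_iff hS (mem_ball_of_mem hx))) ?_
  exact existsUnique_mem_and_iff_of_bijOn (hf x (mem_ball_of_mem hx)) fun y hxy =>
    hf.relevantLe_iff hS (mem_ball_succ_of_adj hx hxy)

end IsCoveringOn

lemma eqOn_labels {f : V → V'} {B : Set V} {ω : V → ℕ → Bool} {ω' : V' → ℕ → Bool}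
    (h : EqOn ω (ω' ∘ f) B) : EqOn (labels ω) (labels ω' ∘ f) B :=
  fun _ hx => congrArg (fun b : ℕ → Bool => {i | b i = true}) (h hx)

/-- The events `E` and `E'` correspond to each other when the labels in `B` are read off along `f`;
in particular `E` depends only on the labels in `B`. -/
def CorrespondsAlong (f : V → V') (B : Set V) (E : Set (V → ℕ → Bool))
    (E' : Set (V' → ℕ → Bool)) : Prop :=
  ∀ ⦃ω ω'⦄, EqOn ω (ω' ∘ f) B → (ω ∈ E ↔ ω' ∈ E')

lemma CorrespondsAlong.inter {f : V → V'} {B : Set V} {E F : Set (V → ℕ → Bool)}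
    {E' F' : Set (V' → ℕ → Bool)} (hE : CorrespondsAlong f B E E')
    (hF : CorrespondsAlong f B F F') :
    CorrespondsAlong f B (E ∩ F) (E' ∩ F') :=
  fun _ _ h => and_congr (hE h) (hF h)

namespace IsCoveringOn

variable {G : SimpleGraph V} {G' : SimpleGraph V'} {f : V → V'} {A : Set V} {k : ℕ} {x : V}

lemma correspondsAlong_white (hf : IsCoveringOn G G' f (ball G A k)) (hx : x ∈ A) :
    CorrespondsAlong f (ball G A (k + 1)) (WEv G k x) (WEv G' k (f x)) :=
  fun _ _ h => hf.mem_white_iff (eqOn_labels h) hx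

lemma correspondsAlong_blue (hf : IsCoveringOn G G' f (ball G A k)) (hx : x ∈ A) :
    CorrespondsAlong f (ball G A (k + 1)) (BEv G k x) (BEv G' k (f x)) :=
  fun _ _ h => hf.mem_blue_iff (eqOn_labels h) hx

lemma correspondsAlong_relevantLe (hf : IsCoveringOn G G' f (ball G A k)) (hx : x ∈ ball G A 1) :
    CorrespondsAlong f (ball G A (k + 1)) (RLeEv G k x) (RLeEv G' k (f x)) :=
  fun _ _ h => hf.relevantLe_iff (eqOn_labels h) hx

end IsCoveringOn

end Transfer

section Measurability

lemma measurableSet_label (v : V) (i : ℕ) : MeasurableSet {ω : V → ℕ → Bool | ω v i = true} :=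
  measurableSet_eq_fun ((measurable_pi_apply i).comp (measurable_pi_apply v)) measurable_const

lemma measurable_comp_vertices (f : V → V') :
    Measurable fun (ω : V' → ℕ → Bool) => ω ∘ f :=
  measurable_pi_lambda _ fun x => measurable_pi_apply (f x)

lemma pi_eq_generateFrom_label : (MeasurableSpace.pi : MeasurableSpace (V → ℕ → Bool)) =
    MeasurableSpace.generateFrom (range fun q : V × ℕ => {ω | ω q.1 q.2 = true}) := by
  refine le_antisymm ?_ (MeasurableSpace.generateFrom_le ?_)
  · let m := MeasurableSpace.generateFrom
      (range fun q : V × ℕ => {ω : V → ℕ → Bool | ω q.1 q.2 = true})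
    have hid : Measurable[m, MeasurableSpace.pi] fun ω : V → ℕ → Bool => ω :=
      measurable_pi_iff.2 fun v => measurable_pi_iff.2 fun i =>
        measurable_to_bool (MeasurableSpace.measurableSet_generateFrom ⟨(v, i), rfl⟩)
    exact fun _ hs => hid hs
  · rintro _ ⟨q, rfl⟩
    exact measurableSet_label q.1 q.2

lemma measurableSet_exists_mem {ι Ω : Type*} [MeasurableSpace Ω] {s : Set ι} (hs : s.Countable)
    {E : ι → Set Ω} (hE : ∀ x ∈ s, MeasurableSet (E x)) :
    MeasurableSet {ω | ∃ x ∈ s, ω ∈ E x} := by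
  have heq : {ω | ∃ x ∈ s, ω ∈ E x} = ⋃ x ∈ s, E x := by
    ext ω
    simp only [mem_ofPred_eq, mem_iUnion, exists_prop]
  exact heq ▸ .biUnion hs hE

lemma measurableSet_existsUnique_mem {ι Ω : Type*} [MeasurableSpace Ω] {s : Set ι}
    (hs : s.Countable) {E : ι → Set Ω} (hE : ∀ x, MeasurableSet (E x)) :
    MeasurableSet {ω | ∃! x, x ∈ s ∧ ω ∈ E x} := by
  have heq : {ω | ∃! x, x ∈ s ∧ ω ∈ E x} = ⋃ x ∈ s, E x \ ⋃ y ∈ s \ {x}, E y := by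
    ext ω
    simp only [mem_ofPred_eq, ExistsUnique, mem_iUnion, Set.mem_sdiff, mem_singleton_iff,
      exists_prop, not_exists]
    grind
  rw [heq]
  exact .biUnion hs fun x _ => (hE x).diff (.biUnion (hs.mono sdiff_subset) fun y _ => hE y)

variable {G : SimpleGraph V} [G.LocallyFinite]

lemma countable_neighborSet (v : V) : (G.neighborSet v).Countable :=
  (G.neighborSet v).toFinite.countable

lemma measurableSet_relevant (i : ℕ) (v : V) :
    MeasurableSet {ω : V → ℕ → Bool | Relevant G (labels ω) i v} := by
  induction i using Nat.strong_induction_on generalizing v with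
  | _ i ih =>
    have hbefore (u : V) : MeasurableSet {ω : V → ℕ → Bool | ∃ j < i, Relevant G (labels ω) j u} :=
      measurableSet_exists_mem (to_countable (Iio i)) fun j hj => ih j hj u
    have hnot : {ω : V → ℕ → Bool | ∀ j < i, ¬ Relevant G (labels ω) j v} =
        {ω | ∃ j < i, Relevant G (labels ω) j v}ᶜ := by
      ext ω
      simp only [mem_compl_iff, mem_ofPred_eq, not_exists, not_and]
    have hrec : {ω : V → ℕ → Bool | Relevant G (labels ω) i v} = _ := Set.ext fun _ => relevant_iff
    rw [hrec]
    exact ((MeasurableSet.const _).inter (measurableSet_label v 0)).union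
      ((measurableSet_label v i).inter ((hnot ▸ (hbefore v).compl).inter
        (measurableSet_existsUnique_mem (countable_neighborSet v) hbefore)))

lemma measurableSet_RLeEv (l : ℕ) (v : V) : MeasurableSet (RLeEv G l v) :=
  measurableSet_exists_mem (to_countable (Iic l)) fun j _ => measurableSet_relevant j v

lemma measurableSet_WEv (l : ℕ) (v : V) : MeasurableSet (WEv G l v) := by
  have heq : WEv G l v =
      (RLeEv G l v)ᶜ ∩ {ω | ∃ u ∈ G.neighborSet v, ω ∈ RLeEv G l u}ᶜ := by
    ext ω
    simp only [WEv, White, RLeEv, mem_ofPred_eq, mem_inter_iff, mem_compl_iff, not_exists, not_and,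
      SimpleGraph.mem_neighborSet]
  exact heq ▸ (measurableSet_RLeEv l v).compl.inter
    (measurableSet_exists_mem (countable_neighborSet v) fun u _ => measurableSet_RLeEv l u).compl

lemma measurableSet_BEv (l : ℕ) (v : V) : MeasurableSet (BEv G l v) :=
  (measurableSet_RLeEv l v).compl.inter
    (measurableSet_existsUnique_mem (countable_neighborSet v) (measurableSet_RLeEv l))

end Measurability

namespace IsLabelMeasure

variable {μ ν : Measure (V → ℕ → Bool)} {μ' : Measure (V' → ℕ → Bool)} {p₀ p : ℝ}

lemma measure_biInter (hμ : IsLabelMeasure μ p₀ p) (s : Finset (V × ℕ)) :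
    μ (⋂ q ∈ s, {ω | ω q.1 q.2 = true}) =
      ∏ q ∈ s, ENNReal.ofReal (if q.2 = 0 then p₀ else p) :=
  (hμ.2.1.meas_biInter s).trans (Finset.prod_congr rfl fun q _ => hμ.2.2 q.1 q.2)

lemma eq (hμ : IsLabelMeasure μ p₀ p) (hν : IsLabelMeasure ν p₀ p) : μ = ν := by
  have := hμ.1
  have := hν.1
  let label : V × ℕ → Set (V → ℕ → Bool) := fun q => {ω | ω q.1 q.2 = true}
  refine ext_of_generate_finite (piiUnionInter (fun q => {label q}) univ) ?_
    (isPiSystem_piiUnionInter _ (fun q => IsPiSystem.singleton (label q)) univ) ?_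
    (by rw [measure_univ, measure_univ])
  · rw [generateFrom_piiUnionInter_singleton_left, pi_eq_generateFrom_label]
    simp only [label, mem_univ, true_and, range]
  · rw [piiUnionInter_singleton_left]
    rintro _ ⟨s, -, rfl⟩
    exact (hμ.measure_biInter s).trans (hν.measure_biInter s).symm

lemma map_comp (hμ' : IsLabelMeasure μ' p₀ p) {f : V → V'} (hf : Function.Injective f) :
    IsLabelMeasure (μ'.map fun ω => ω ∘ f) p₀ p := by
  have := hμ'.1
  have hmeas := measurable_comp_vertices f
  refine ⟨Measure.isProbabilityMeasure_map hmeas.aemeasurable, ?_, fun v i => ?_⟩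
  · have hindep := hμ'.2.1.precomp (g := Prod.map f id) (hf.prodMap Function.injective_id)
    rw [iIndepSet_iff_meas_biInter fun _ => measurableSet_label _ _]
    intro s
    rw [Measure.map_apply hmeas (s.measurableSet_biInter fun q _ => measurableSet_label _ _)]
    simp only [Measure.map_apply hmeas (measurableSet_label _ _), preimage_iInter]
    exact hindep.meas_biInter s
  · rw [Measure.map_apply hmeas (measurableSet_label v i)]
    exact hμ'.2.2 (f v) i

lemma measure_eq_of_correspondsAlong (hμ : IsLabelMeasure μ p₀ p) (hμ' : IsLabelMeasure μ' p₀ p)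
    {f : V → V'} {B : Set V} (hf : InjOn f B) {E : Set (V → ℕ → Bool)}
    {E' : Set (V' → ℕ → Bool)} (hE : MeasurableSet E) (h : CorrespondsAlong f B E E') :
    μ E = μ' E' := by
  classical
  let e : B → V' := fun x => f x
  have he : Function.Injective e := injOn_iff_injective.1 hf
  let extend : (B → ℕ → Bool) → V → ℕ → Bool :=
    fun η x => if hx : x ∈ B then η ⟨x, hx⟩ else fun _ => false
  have hextend : Measurable extend := by
    refine measurable_pi_lambda _ fun x => ?_
    by_cases hx : x ∈ B
    · simpa only [extend, dif_pos hx] using measurable_pi_apply _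
    · simpa only [extend, dif_neg hx] using measurable_const
  let F : Set (B → ℕ → Bool) := extend ⁻¹' E
  have hF : MeasurableSet F := hextend hE
  have hF' (ω' : V' → ℕ → Bool) : ω' ∘ e ∈ F ↔ ω' ∈ E' := h fun x hx => dif_pos hx
  have hFE (ω : V → ℕ → Bool) : ω ∘ Subtype.val ∈ F ↔ ω ∈ E := by
    obtain ⟨ω', hω'⟩ : ∃ ω' : V' → ℕ → Bool, ω' ∘ e = ω ∘ Subtype.val :=
      he.surjective_comp_right _
    rw [← hω', hF', h fun x hx => (congrFun hω' ⟨x, hx⟩).symm]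
  calc μ E = μ.map (fun ω => ω ∘ Subtype.val) F := by
        rw [Measure.map_apply (measurable_comp_vertices _) hF]
        exact congrArg μ (Set.ext fun ω => (hFE ω).symm)
    _ = μ'.map (fun ω' => ω' ∘ e) F := by
        rw [(hμ.map_comp Subtype.val_injective).eq (hμ'.map_comp he)]
    _ = μ' E' := by
        rw [Measure.map_apply (measurable_comp_vertices _) hF]
        exact congrArg μ' (Set.ext hF')

end IsLabelMeasure

lemma IsRegular.isRegularOfDegree {G : SimpleGraph V} [G.LocallyFinite] {r : ℕ}
    (hG : IsRegular G r) : G.IsRegularOfDegree r := fun v => by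
  rw [← hG v, ncard_eq_toFinset_card']
  rfl

theorem colour_event_probabilities_independent_of_vertex_general
    {G : SimpleGraph V} {G' : SimpleGraph V'} [G.LocallyFinite] [G'.LocallyFinite] {r : ℕ}
    (hG : G.IsRegularOfDegree r) (hG' : G'.IsRegularOfDegree r) {i : ℕ}
    (hg : ((2 * i + 4 : ℕ) : ℕ∞) ≤ G.egirth) (hg' : ((2 * i + 4 : ℕ) : ℕ∞) ≤ G'.egirth)
    {p₀ p : ℝ} {μ : Measure (V → ℕ → Bool)} {μ' : Measure (V' → ℕ → Bool)}
    (hμ : IsLabelMeasure μ p₀ p) (hμ' : IsLabelMeasure μ' p₀ p) :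
    (∀ u v u' v', G.Adj u v → G'.Adj u' v' →
      μ (WEv G i u) = μ' (WEv G' i u') ∧
      μ (BEv G i u) = μ' (BEv G' i u') ∧
      μ (WEv G i u ∩ WEv G i v) = μ' (WEv G' i u' ∩ WEv G' i v') ∧
      μ (BEv G i u ∩ WEv G i v) = μ' (BEv G' i u' ∩ WEv G' i v') ∧
      μ (BEv G i u ∩ BEv G i v) = μ' (BEv G' i u' ∩ BEv G' i v')) ∧
    (∀ u v w u' v' w', G.Adj u v → G.Adj u w → v ≠ w → G'.Adj u' v' → G'.Adj u' w' → v' ≠ w' →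
      μ (BEv G i v ∩ BEv G i u ∩ RLeEv G i w) =
        μ' (BEv G' i v' ∩ BEv G' i u' ∩ RLeEv G' i w')) := by
  have hW (x : V) : MeasurableSet (WEv G i x) := measurableSet_WEv i x
  have hB (x : V) : MeasurableSet (BEv G i x) := measurableSet_BEv i x
  refine ⟨fun u v u' v' huv huv' => ?_, fun u v w u' v' w' huv huw hvw huv' huw' hvw' => ?_⟩
  · obtain ⟨f, rfl, rfl, -, hf⟩ := exists_isCoveringOn_ball hG hG' huv huv huv' huv'
      (iff_of_true rfl rfl) hg hg'
    have hinj := hf.injOn_ball huv hg'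
    have hWu := hf.correspondsAlong_white (x := u) (.inl rfl)
    have hBu := hf.correspondsAlong_blue (x := u) (.inl rfl)
    have hWv := hf.correspondsAlong_white (x := v) (.inr rfl)
    have hBv := hf.correspondsAlong_blue (x := v) (.inr rfl)
    exact ⟨hμ.measure_eq_of_correspondsAlong hμ' hinj (hW u) hWu,
      hμ.measure_eq_of_correspondsAlong hμ' hinj (hB u) hBu,
      hμ.measure_eq_of_correspondsAlong hμ' hinj ((hW u).inter (hW v)) (hWu.inter hWv),
      hμ.measure_eq_of_correspondsAlong hμ' hinj ((hB u).inter (hW v)) (hBu.inter hWv),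
      hμ.measure_eq_of_correspondsAlong hμ' hinj ((hB u).inter (hB v)) (hBu.inter hBv)⟩
  · obtain ⟨f, rfl, rfl, rfl, hf⟩ := exists_isCoveringOn_ball hG hG' huv huw huv' huw'
      (iff_of_false hvw hvw') hg hg'
    have hw : w ∈ ball G {u, v} 1 := mem_ball_succ_of_adj (.inl rfl) huw
    exact hμ.measure_eq_of_correspondsAlong hμ' (hf.injOn_ball huv hg')
      (((hB v).inter (hB u)).inter (measurableSet_RLeEv i w))
      (((hf.correspondsAlong_blue (.inr rfl)).inter (hf.correspondsAlong_blue (.inl rfl))).inter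
        (hf.correspondsAlong_relevantLe hw))

/-- In an `r`-regular graph of girth `≥ g`, for `2i < g − 3`, the
probabilities of the basic one- and two-vertex colour events do not depend on the choice
of the vertex `u`, of the neighbour `v` of `u`, nor (for the last event) of a second
neighbour `w ≠ v` of `u`. -/
theorem colour_event_probabilities_independent_of_vertex
    [Fintype V] (r g : ℕ) (G : SimpleGraph V)
    (hreg : IsRegular G r) (hg : (g : ℕ∞) ≤ G.egirth)
    (p₀ p : ℝ) (hp₀ : p₀ ∈ Ioo (0 : ℝ) 1) (hp : p ∈ Ioo (0 : ℝ) 1)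
    (μ : Measure (V → ℕ → Bool)) (hμ : IsLabelMeasure μ p₀ p)
    (i : ℕ) (hi : 2 * i < g - 3) :
    (∀ u v u' v' : V, G.Adj u v → G.Adj u' v' →
      μ (WEv G i u) = μ (WEv G i u') ∧
      μ (BEv G i u) = μ (BEv G i u') ∧
      μ (WEv G i u ∩ WEv G i v) = μ (WEv G i u' ∩ WEv G i v') ∧
      μ (BEv G i u ∩ WEv G i v) = μ (BEv G i u' ∩ WEv G i v') ∧
      μ (BEv G i u ∩ BEv G i v) = μ (BEv G i u' ∩ BEv G i v')) ∧
    (∀ u v w u' v' w' : V, G.Adj u v → G.Adj u w → v ≠ w →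
      G.Adj u' v' → G.Adj u' w' → v' ≠ w' →
      μ (BEv G i v ∩ BEv G i u ∩ RLeEv G i w)
        = μ (BEv G i v' ∩ BEv G i u' ∩ RLeEv G i w')) := by
  classical
  have hG := hreg.isRegularOfDegree
  have hgirth : ((2 * i + 4 : ℕ) : ℕ∞) ≤ G.egirth := le_trans (by exact_mod_cast (by omega)) hg
  exact colour_event_probabilities_independent_of_vertex_general hG hG hgirth hgirth hμ hμ

end InducedForest
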